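/- Let μ and ν be probability measures on (0,1), both absolutely continuous with respect to Lebesgue measure, and let W ⊆ (0,1)×(0,1) be a set of class A_{δσ} such that W ∩ (A×B) ≠ ∅ whenever Leb(A) > 0 and Leb(B) > 0. Then sup{m(W) : m a coupling of μ and ν} = 1. -/

import Mathlib

open MeasureTheory Set
open scoped ENNReal

noncomputable section

/-- A finite union of measurable rectangles `U ×ˢ V`, `U, V` Borel in `(0,1)`. -/
def IsFinUnionRect (S : Set (ℝ × ℝ)) : Prop :=
  ∃ (n : ℕ) (R : Fin n → Set (ℝ × ℝ)),
    (∀ k, ∃ U V : Set ℝ, MeasurableSet U ∧ MeasurableSet V ∧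
      U ⊆ Ioo (0:ℝ) 1 ∧ V ⊆ Ioo (0:ℝ) 1 ∧ R k = U ×ˢ V) ∧
    S = ⋃ k, R k

/-- The class `A_{δσ}`: countable unions of countable intersections of
finite unions of measurable rectangles. -/
def MemADeltaSigma (W : Set (ℝ × ℝ)) : Prop :=
  ∃ G : ℕ → ℕ → Set (ℝ × ℝ),
    (∀ i j, IsFinUnionRect (G i j)) ∧ W = ⋃ i, ⋂ j, G i j

open Filter Topology
open scoped Pointwise CompactlySupported

/-!
Call a measure with marginals below `μ` and `ν` a partial coupling. For a closed subset `K` of a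
product of compact spaces, the largest mass of a partial coupling carried by `K` equals the infimum
of `∫ f dμ + ∫ g dν` over continuous `f, g ≥ 0` with `f x + g y ≥ 1` on `K`, by Hahn–Banach and
Riesz. If it is zero, choose `fₙ, gₙ` of cost below `2⁻ⁿ`: as `∑ fₙ x + ∑ gₙ y` diverges on `K`,
the null strips over `A = {∑ fₙ = ∞}` and `B = {∑ gₙ = ∞}` cover `K`.
An intersection of finite unions of rectangles becomes closed after embedding each factor in a
Cantor space that makes the countably many sides clopen, so the dichotomy passes to such
intersections and then to their countable unions `W`.

A partial coupling carried by `W` and maximal for the order of measures must be a coupling: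
otherwise both leftover marginals are nonzero, `W` is not covered by strips null for them because
it meets every rectangle with non-null sides, and `W` carries a nonzero partial coupling of the
leftovers, which could be added to the maximal one.
-/

section General

/-- The Brézis–Browder ordering principle. -/
lemma exists_forall_ge_apply_eq_of_monotone {α : Type*} [Preorder α] [Nonempty α] {f : α → ℝ}
    (hf : Monotone f) (hbdd : BddAbove (range f))
    (hseq : ∀ u : ℕ → α, Monotone u → BddAbove (range u)) :
    ∃ a, ∀ b, a ≤ b → f b = f a := by
  have exists_almost_max (n : ℕ) (a : α) : ∃ b, a ≤ b ∧ ∀ c, b ≤ c → f c ≤ f b + 1 / (n + 1) := by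
    have hbdd_Ici : BddAbove (f '' Ici a) := hbdd.mono (image_subset_range _ _)
    obtain ⟨_, ⟨b, hab, rfl⟩, hb⟩ := exists_lt_of_lt_csSup (nonempty_Ici.image f)
      (sub_lt_self (sSup (f '' Ici a)) (Nat.one_div_pos_of_nat (α := ℝ) (n := n)))
    refine ⟨b, hab, fun c hbc => ?_⟩
    linarith [le_csSup hbdd_Ici (mem_image_of_mem f (le_trans hab hbc : a ≤ c))]
  choose next le_next next_max using exists_almost_max
  let u : ℕ → α := Nat.rec (Classical.arbitrary α) next
  obtain ⟨a, ha⟩ := hseq u (monotone_nat_of_le_succ fun n => le_next n (u n))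
  refine ⟨a, fun b hab => le_antisymm ?_ (hf hab)⟩
  have hle (n : ℕ) : f b ≤ f a + 1 / (n + 1) :=
    have hua : u (n + 1) ≤ a := ha (mem_range_self (n + 1))
    (next_max n (u n) b (hua.trans hab)).trans (by gcongr; exact hf hua)
  simpa using ge_of_tendsto' (tendsto_one_div_add_atTop_nhds_zero_nat.const_add (f a)) hle

lemma exists_linearMap_apply_eq_of_sublinear {E : Type*} [AddCommGroup E] [Module ℝ E] {N : E → ℝ}
    (N_smul : ∀ c : ℝ, 0 < c → ∀ x, N (c • x) = c * N x) (N_add : ∀ x y, N (x + y) ≤ N x + N y)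
    (x : E) : ∃ L : E →ₗ[ℝ] ℝ, L x = N x ∧ ∀ y, L y ≤ N y := by
  have N_zero : N 0 = 0 := by linarith [N_smul 2 two_pos 0, congrArg N (smul_zero (2 : ℝ) (A := E))]
  have mul_le_N_smul (c : ℝ) : c * N x ≤ N (c • x) := by
    rcases lt_trichotomy c 0 with hc | rfl | hc
    · have hneg := N_smul (-c) (neg_pos.2 hc) x
      have hadd := N_add (c • x) (-c • x)
      rw [← add_smul, add_neg_cancel, zero_smul, N_zero] at hadd
      linarith
    · simp [N_zero]
    · exact (N_smul c hc x).ge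
  let F : E →ₗ.[ℝ] ℝ := LinearPMap.mkSpanSingleton' x (N x) fun c hc => by
    rcases smul_eq_zero.1 hc with rfl | rfl <;> simp [N_zero]
  obtain ⟨L, hLF, hL⟩ := exists_extension_of_le_sublinear F N N_smul N_add <| by
    rintro ⟨_, hy⟩
    obtain ⟨c, rfl⟩ := Submodule.mem_span_singleton.1 hy
    rw [LinearPMap.mkSpanSingleton'_apply]
    exact mul_le_N_smul c
  refine ⟨L, ?_, hL⟩
  rw [hLF ⟨x, Submodule.mem_span_singleton_self x⟩]
  exact LinearPMap.mkSpanSingleton'_apply_self _ _ _ _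

lemma iSup_measure_apply_of_monotone {Ω : Type*} [MeasurableSpace Ω] {M : ℕ → Measure Ω}
    (hM : Monotone M) {s : Set Ω} (hs : MeasurableSet s) : (⨆ n, M n) s = ⨆ n, M n s := by
  let m : Measure Ω := Measure.ofMeasurable (fun s _ => ⨆ n, M n s) (by simp) fun t ht hd => by
    simp only [measure_iUnion hd ht, ← lintegral_count]
    exact (lintegral_iSup (fun _ => .of_discrete) fun _ _ hkn i => hM hkn (t i)).symm
  have hm {t : Set Ω} (ht : MeasurableSet t) : m t = ⨆ n, M n t := Measure.ofMeasurable_apply t ht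
  have hle : ⨆ n, M n ≤ m := iSup_le fun n => Measure.le_iff.2 fun t ht => by
    rw [hm ht]
    exact le_iSup (fun n => M n t) n
  exact le_antisymm ((hle s).trans (hm hs).le) (iSup_le fun n => le_iSup M n s)

lemma map_iSup_le_of_monotone {Ω Ω' : Type*} [MeasurableSpace Ω] [MeasurableSpace Ω']
    {M : ℕ → Measure Ω} (hM : Monotone M) {f : Ω → Ω'} (hf : Measurable f) {μ : Measure Ω'}
    (h : ∀ n, (M n).map f ≤ μ) : (⨆ n, M n).map f ≤ μ :=
  Measure.le_iff.2 fun s hs => by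
    rw [Measure.map_apply hf hs, iSup_measure_apply_of_monotone hM (hf hs)]
    exact iSup_le fun n => Measure.map_apply hf hs ▸ h n s

lemma measure_compl_toMeasurable_ne_zero {Ω : Type*} [MeasurableSpace Ω] {μ ν : Measure Ω}
    (hνμ : ν ≪ μ) (hν : ν ≠ 0) {s : Set Ω} (hs : ν s = 0) : μ (toMeasurable ν s)ᶜ ≠ 0 := fun h =>
  hν <| Measure.measure_univ_eq_zero.1 <| union_compl_self (toMeasurable ν s) ▸
    measure_union_null ((measure_toMeasurable s).trans hs) (hνμ h)

lemma map_comap_le_of_map_le {Ω Ω' X X' : Type*} [MeasurableSpace Ω] [MeasurableSpace Ω']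
    [MeasurableSpace X] [MeasurableSpace X'] {Φ : Ω → Ω'} {φ : X → X'} {π : Ω → X} {π' : Ω' → X'}
    (hΦ : MeasurableEmbedding Φ) (hφ : MeasurableEmbedding φ) (hπ : Measurable π)
    (hπ' : Measurable π') (hcomm : π' ∘ Φ = φ ∘ π) {m : Measure Ω'} {μ : Measure X}
    (h : m.map π' ≤ μ.map φ) : (m.comap Φ).map π ≤ μ :=
  Measure.le_iff.2 fun s hs =>
    calc (m.comap Φ).map π s
      _ = m (Φ '' (π ⁻¹' s)) := by rw [Measure.map_apply hπ hs, hΦ.comap_apply]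
      _ ≤ m (π' ⁻¹' (φ '' s)) := measure_mono <| image_subset_iff.2 fun z hz =>
        ⟨π z, hz, (congrFun hcomm z).symm⟩
      _ = m.map π' (φ '' s) := (Measure.map_apply hπ' (hφ.measurableSet_image.2 hs)).symm
      _ ≤ μ.map φ (φ '' s) := h _
      _ = μ s := by rw [hφ.map_apply, preimage_image_eq s hφ.injective]

lemma measure_sub_ne_zero_of_le_of_measure_univ_ne {Ω : Type*} [MeasurableSpace Ω]
    {μ ν : Measure Ω} [IsFiniteMeasure ν] (hνμ : ν ≤ μ) (huniv : ν univ ≠ μ univ) : μ - ν ≠ 0 :=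
  fun h => huniv <| congrArg (fun τ : Measure Ω => τ univ) <| by
    simpa only [h, zero_add] using Measure.sub_add_cancel_of_le hνμ

lemma measure_inter_ne_zero_of_absolutelyContinuous_restrict {Ω : Type*} [MeasurableSpace Ω]
    {μ τ : Measure Ω} {s t : Set Ω} (hμ : μ ≪ τ.restrict s) (ht : MeasurableSet t)
    (hμt : μ t ≠ 0) : τ (t ∩ s) ≠ 0 := fun h =>
  hμt <| hμ <| (Measure.restrict_apply ht).trans h

lemma ae_summable_of_summable_integral {Ω : Type*} [MeasurableSpace Ω] {μ : Measure Ω}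
    {f : ℕ → Ω → ℝ} (hf : ∀ n, Integrable (f n) μ) (hf_nonneg : ∀ n, 0 ≤ f n)
    (hsum : Summable fun n => ∫ x, f n x ∂μ) : ∀ᵐ x ∂μ, Summable fun n => f n x := by
  have hmeas (n : ℕ) : AEMeasurable (fun x => ENNReal.ofReal (f n x)) μ :=
    (hf n).aemeasurable.ennreal_ofReal
  have hfin : ∫⁻ x, ∑' n, ENNReal.ofReal (f n x) ∂μ ≠ ∞ := by
    simp only [lintegral_tsum hmeas,
      ← ofReal_integral_eq_lintegral_ofReal (hf _) (.of_forall (hf_nonneg _))]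
    exact hsum.tsum_ofReal_ne_top
  filter_upwards [ae_lt_top' (AEMeasurable.tsum hmeas) hfin] with x hx
  simpa only [ENNReal.toReal_ofReal (hf_nonneg _ x)] using ENNReal.summable_toReal hx.ne

lemma exists_measurableEmbedding_forall_isClopen {X ι : Type*} [MeasurableSpace X]
    [StandardBorelSpace X] [Countable ι] {S : ι → Set X} (hS : ∀ i, MeasurableSet (S i)) :
    ∃ φ : X → (ℕ ⊕ ι → Bool), MeasurableEmbedding φ ∧
      ∀ i, ∃ C, IsClopen C ∧ φ ⁻¹' C = S i := by
  classical
  let φ (x : X) : ℕ ⊕ ι → Bool :=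
    Sum.elim (MeasurableSpace.mapNatBool X x) fun i => decide (x ∈ S i)
  have hφ : Measurable φ := measurable_pi_iff.2 <| Sum.rec
    (measurable_pi_iff.1 (MeasurableSpace.measurable_mapNatBool X))
    fun i => measurable_to_bool (by simpa [φ, preimage] using hS i)
  have hφ_inj : Function.Injective φ := fun x y hxy =>
    MeasurableSpace.injective_mapNatBool X (funext fun n => congrFun hxy (Sum.inl n))
  refine ⟨φ, hφ.measurableEmbedding hφ_inj, fun i => ⟨{b | b (Sum.inr i) = true}, ?_, ?_⟩⟩
  · exact (isClopen_discrete {true}).preimage (continuous_apply (Sum.inr i))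
  · simp [φ, preimage]

end General

section CompactSpace

variable {X Y Z : Type*}
  [TopologicalSpace X] [MeasurableSpace X]
  [TopologicalSpace Y] [MeasurableSpace Y]
  [TopologicalSpace Z]

lemma integrable_continuousMap [CompactSpace X] [OpensMeasurableSpace X] (μ : Measure X)
    [IsFiniteMeasure μ] (f : C(X, ℝ)) : Integrable f μ :=
  (BoundedContinuousFunction.mkOfCompact f).integrable μ

lemma exists_isFiniteMeasure_integral_eq [CompactSpace X] [T2Space X] [BorelSpace X]
    (L : C(X, ℝ) →ₗ[ℝ] ℝ) (hL : ∀ f, 0 ≤ f → 0 ≤ L f) :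
    ∃ m : Measure X, IsFiniteMeasure m ∧ ∀ f : C(X, ℝ), ∫ x, f x ∂m = L f := by
  let Λ : C_c(X, ℝ) →ₚ[ℝ] ℝ := PositiveLinearMap.mk₀
    { toFun := fun f => L f.toContinuousMap
      map_add' := fun f g => L.map_add f.toContinuousMap g.toContinuousMap
      map_smul' := fun c f => L.map_smul c f.toContinuousMap }
    fun f hf => hL f.toContinuousMap hf
  exact ⟨RealRMK.rieszMeasure Λ, inferInstance, fun f =>
    RealRMK.integral_rieszMeasure Λ (CompactlySupportedContinuousMap.continuousMapEquiv f)⟩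

lemma measure_le_of_forall_integral_le [CompactSpace X] [T2Space X] [HasOuterApproxClosed X]
    [BorelSpace X] {μ ν : Measure X} [IsFiniteMeasure μ] [IsFiniteMeasure ν]
    (h : ∀ f : C(X, ℝ), 0 ≤ f → ∫ x, f x ∂μ ≤ ∫ x, f x ∂ν) : μ ≤ ν := by
  let integralMap (τ : Measure X) [IsFiniteMeasure τ] : C(X, ℝ) →ₗ[ℝ] ℝ :=
    { toFun := fun f => ∫ x, f x ∂τ
      map_add' := fun f g => integral_add (integrable_continuousMap τ f)
        (integrable_continuousMap τ g)
      map_smul' := fun c f => integral_const_mul c f }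
  obtain ⟨ρ, _, hρ⟩ := exists_isFiniteMeasure_integral_eq (integralMap ν - integralMap μ)
    fun f hf => sub_nonneg.2 (h f hf)
  have hν : μ + ρ = ν := ext_of_forall_integral_eq_of_IsFiniteMeasure fun f => by
    rw [integral_add_measure (f.integrable μ) (f.integrable ρ)]
    exact (congrArg _ (hρ f.toContinuousMap)).trans (add_sub_cancel _ _)
  exact hν ▸ Measure.le_add_right le_rfl

/-- The costs `∫ f dμ + ∫ g dν` of the pairs of nonnegative continuous functions which cover
`h : C(Z, ℝ)` in the sense that `h ≤ f ∘ p + g ∘ q`. These are the values of the dual problem to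
maximizing `∫ h dm` over the measures `m` on `Z` with `m.map p ≤ μ` and `m.map q ≤ ν`. The case of
interest is a closed set `Z ⊆ X × Y` with its two projections. -/
def coverCosts (p : C(Z, X)) (q : C(Z, Y)) (μ : Measure X) (ν : Measure Y) (h : C(Z, ℝ)) : Set ℝ :=
  {a | ∃ (f : C(X, ℝ)) (g : C(Y, ℝ)), 0 ≤ f ∧ 0 ≤ g ∧ h ≤ f.comp p + g.comp q ∧
    ∫ x, f x ∂μ + ∫ y, g y ∂ν = a}

/-- The infimum cost of covering `h`, as a functional of `h` to which the Hahn–Banach theorem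
applies. -/
def coverCost (p : C(Z, X)) (q : C(Z, Y)) (μ : Measure X) (ν : Measure Y) (h : C(Z, ℝ)) : ℝ :=
  sInf (coverCosts p q μ ν h)

variable {p : C(Z, X)} {q : C(Z, Y)} {μ : Measure X} {ν : Measure Y}

lemma nonneg_of_mem_coverCosts {h : C(Z, ℝ)} {a : ℝ} (ha : a ∈ coverCosts p q μ ν h) : 0 ≤ a := by
  obtain ⟨f, g, hf, hg, -, rfl⟩ := ha
  exact add_nonneg (integral_nonneg hf) (integral_nonneg hg)

lemma bddBelow_coverCosts (h : C(Z, ℝ)) : BddBelow (coverCosts p q μ ν h) :=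
  ⟨0, fun _ => nonneg_of_mem_coverCosts⟩

lemma coverCosts_nonempty [CompactSpace Z] (h : C(Z, ℝ)) : (coverCosts p q μ ν h).Nonempty := by
  refine ⟨_, ContinuousMap.const X ‖h‖, 0, fun _ => norm_nonneg h, le_rfl, fun z => ?_, rfl⟩
  simpa using (le_abs_self _).trans (h.norm_coe_le_norm z)

lemma smul_coverCosts_subset {c : ℝ} (hc : 0 < c) (h : C(Z, ℝ)) :
    c • coverCosts p q μ ν h ⊆ coverCosts p q μ ν (c • h) := by
  rintro _ ⟨_, ⟨f, g, hf, hg, hfg, rfl⟩, rfl⟩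
  refine ⟨c • f, c • g, smul_nonneg hc.le hf, smul_nonneg hc.le hg, fun z => ?_, ?_⟩
  · simpa [mul_add] using mul_le_mul_of_nonneg_left (hfg z) hc.le
  · simp [integral_const_mul, mul_add]

lemma coverCosts_smul {c : ℝ} (hc : 0 < c) (h : C(Z, ℝ)) :
    coverCosts p q μ ν (c • h) = c • coverCosts p q μ ν h := by
  refine Subset.antisymm ?_ (smul_coverCosts_subset hc h)
  have hinv := smul_coverCosts_subset (p := p) (q := q) (μ := μ) (ν := ν) (inv_pos.2 hc) (c • h)
  rw [inv_smul_smul₀ hc.ne'] at hinv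
  exact (subset_smul_set_iff₀ hc.ne').2 hinv

lemma coverCost_le_of_le_comp_add_comp {h : C(Z, ℝ)} {f : C(X, ℝ)} {g : C(Y, ℝ)} (hf : 0 ≤ f)
    (hg : 0 ≤ g) (hfg : h ≤ f.comp p + g.comp q) :
    coverCost p q μ ν h ≤ ∫ x, f x ∂μ + ∫ y, g y ∂ν :=
  csInf_le (bddBelow_coverCosts h) ⟨f, g, hf, hg, hfg, rfl⟩

lemma coverCost_smul {c : ℝ} (hc : 0 < c) (h : C(Z, ℝ)) :
    coverCost p q μ ν (c • h) = c * coverCost p q μ ν h := by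
  rw [coverCost, coverCosts_smul hc, Real.sInf_smul_of_nonneg hc.le, smul_eq_mul, coverCost]

lemma coverCosts_add_subset [CompactSpace X] [OpensMeasurableSpace X] [CompactSpace Y]
    [OpensMeasurableSpace Y] [IsFiniteMeasure μ] [IsFiniteMeasure ν] (h k : C(Z, ℝ)) :
    coverCosts p q μ ν h + coverCosts p q μ ν k ⊆ coverCosts p q μ ν (h + k) := by
  rintro _ ⟨_, ⟨f, g, hf, hg, hfg, rfl⟩, _, ⟨f', g', hf', hg', hfg', rfl⟩, rfl⟩
  refine ⟨f + f', g + g', add_nonneg hf hf', add_nonneg hg hg', fun z => ?_, ?_⟩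
  · exact (add_le_add (hfg z) (hfg' z)).trans_eq (add_add_add_comm _ _ _ _)
  · simp only [ContinuousMap.add_apply, integral_add (integrable_continuousMap _ _)
      (integrable_continuousMap _ _)]
    exact add_add_add_comm _ _ _ _

lemma coverCost_add_le [CompactSpace X] [OpensMeasurableSpace X] [CompactSpace Y]
    [OpensMeasurableSpace Y] [IsFiniteMeasure μ] [IsFiniteMeasure ν]
    [CompactSpace Z] (h k : C(Z, ℝ)) :
    coverCost p q μ ν (h + k) ≤ coverCost p q μ ν h + coverCost p q μ ν k :=
  calc coverCost p q μ ν (h + k)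
    _ ≤ sInf (coverCosts p q μ ν h + coverCosts p q μ ν k) :=
      csInf_le_csInf (bddBelow_coverCosts _)
        ((coverCosts_nonempty h).add (coverCosts_nonempty k)) (coverCosts_add_subset h k)
    _ = coverCost p q μ ν h + coverCost p q μ ν k :=
      csInf_add (coverCosts_nonempty h) (bddBelow_coverCosts h)
        (coverCosts_nonempty k) (bddBelow_coverCosts k)

lemma exists_real_univ_eq_coverCost_one
    [CompactSpace X] [T2Space X] [HasOuterApproxClosed X] [BorelSpace X]
    [CompactSpace Y] [T2Space Y] [HasOuterApproxClosed Y] [BorelSpace Y]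
    [CompactSpace Z] [T2Space Z] [MeasurableSpace Z] [BorelSpace Z]
    (p : C(Z, X)) (q : C(Z, Y)) (μ : Measure X) (ν : Measure Y)
    [IsFiniteMeasure μ] [IsFiniteMeasure ν] :
    ∃ m : Measure Z, m.map p ≤ μ ∧ m.map q ≤ ν ∧ m.real univ = coverCost p q μ ν 1 := by
  obtain ⟨L, hL_one, hL⟩ := exists_linearMap_apply_eq_of_sublinear
    (fun c hc h => coverCost_smul (p := p) (q := q) (μ := μ) (ν := ν) hc h) coverCost_add_le 1
  have L_nonneg (h : C(Z, ℝ)) (hh : 0 ≤ h) : 0 ≤ L h := by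
    have hneg : L (-h) ≤ 0 := (hL (-h)).trans <|
      (coverCost_le_of_le_comp_add_comp (f := 0) (g := 0) le_rfl le_rfl (by simpa using hh)).trans
        (by simp)
    simpa using hneg
  obtain ⟨m, _, hm⟩ := exists_isFiniteMeasure_integral_eq L L_nonneg
  refine ⟨m, measure_le_of_forall_integral_le fun f hf => ?_,
    measure_le_of_forall_integral_le fun g hg => ?_, ?_⟩
  · calc ∫ x, f x ∂m.map p
      _ = ∫ z, f.comp p z ∂m :=
        integral_map p.measurable.aemeasurable f.continuous.aestronglyMeasurable
      _ = L (f.comp p) := hm _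
      _ ≤ coverCost p q μ ν (f.comp p) := hL _
      _ ≤ ∫ x, f x ∂μ + ∫ y, (0 : C(Y, ℝ)) y ∂ν :=
        coverCost_le_of_le_comp_add_comp hf le_rfl (by simp)
      _ = ∫ x, f x ∂μ := by simp
  · calc ∫ y, g y ∂m.map q
      _ = ∫ z, g.comp q z ∂m :=
        integral_map q.measurable.aemeasurable g.continuous.aestronglyMeasurable
      _ = L (g.comp q) := hm _
      _ ≤ coverCost p q μ ν (g.comp q) := hL _
      _ ≤ ∫ x, (0 : C(X, ℝ)) x ∂μ + ∫ y, g y ∂ν :=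
        coverCost_le_of_le_comp_add_comp le_rfl hg (by simp)
      _ = ∫ y, g y ∂ν := by simp
  · simpa [hL_one] using hm 1

end CompactSpace

section MarginallyNull

variable {X Y X' Y' : Type*} [MeasurableSpace X] [MeasurableSpace Y]
  [MeasurableSpace X'] [MeasurableSpace Y']

/-- A set is marginally null, in Arveson's terminology, if it can be covered by null strips
`A × Y` and `X × B`. Such sets carry no nonzero measure with marginals dominated by `μ` and
`ν`. -/
def IsMarginallyNull (μ : Measure X) (ν : Measure Y) (W : Set (X × Y)) : Prop :=
  ∃ (A : Set X) (B : Set Y), μ A = 0 ∧ ν B = 0 ∧ W ⊆ Prod.fst ⁻¹' A ∪ Prod.snd ⁻¹' B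

variable {μ μ' : Measure X} {ν ν' : Measure Y}

lemma IsMarginallyNull.iUnion {ι : Type*} [Countable ι] {W : ι → Set (X × Y)}
    (hW : ∀ i, IsMarginallyNull μ ν (W i)) : IsMarginallyNull μ ν (⋃ i, W i) := by
  choose A B hA hB hAB using hW
  refine ⟨⋃ i, A i, ⋃ i, B i, measure_iUnion_null hA, measure_iUnion_null hB,
    iUnion_subset fun i => (hAB i).trans ?_⟩
  exact union_subset_union (preimage_mono (subset_iUnion A i)) (preimage_mono (subset_iUnion B i))

lemma IsMarginallyNull.preimage_prodMap {φ : X → X'} {ψ : Y → Y'} (hφ : Measurable φ)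
    (hψ : Measurable ψ) {K : Set (X' × Y')} (hK : IsMarginallyNull (μ.map φ) (ν.map ψ) K) :
    IsMarginallyNull μ ν (Prod.map φ ψ ⁻¹' K) := by
  obtain ⟨A, B, hA, hB, hAB⟩ := hK
  exact ⟨φ ⁻¹' A, ψ ⁻¹' B, Measure.preimage_null_of_map_null hφ.aemeasurable hA,
    Measure.preimage_null_of_map_null hψ.aemeasurable hB, preimage_mono hAB⟩

lemma not_isMarginallyNull_of_forall_inter_prod_nonempty {W : Set (X × Y)}
    (hW : ∀ A B, MeasurableSet A → MeasurableSet B → μ A ≠ 0 → ν B ≠ 0 → (W ∩ A ×ˢ B).Nonempty)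
    (hμ : μ' ≪ μ) (hν : ν' ≪ ν) (hμ' : μ' ≠ 0) (hν' : ν' ≠ 0) :
    ¬ IsMarginallyNull μ' ν' W := by
  rintro ⟨A, B, hA, hB, hAB⟩
  obtain ⟨z, hzW, hzA, hzB⟩ := hW _ _ (measurableSet_toMeasurable μ' A).compl
    (measurableSet_toMeasurable ν' B).compl
    (measure_compl_toMeasurable_ne_zero hμ hμ' hA) (measure_compl_toMeasurable_ne_zero hν hν' hB)
  exact (hAB hzW).elim (fun h => hzA (subset_toMeasurable μ' A h))
    fun h => hzB (subset_toMeasurable ν' B h)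

lemma inter_prod_nonempty_of_absolutelyContinuous_restrict {τ : Measure X} {τ' : Measure Y}
    {s : Set X} {t : Set Y} {W : Set (X × Y)} (hs : MeasurableSet s) (ht : MeasurableSet t)
    (hμ : μ ≪ τ.restrict s) (hν : ν ≪ τ'.restrict t)
    (hW : ∀ A B, MeasurableSet A → MeasurableSet B → A ⊆ s → B ⊆ t → 0 < τ A → 0 < τ' B →
      (W ∩ A ×ˢ B).Nonempty)
    {A : Set X} {B : Set Y} (hA : MeasurableSet A) (hB : MeasurableSet B) (hμA : μ A ≠ 0)
    (hνB : ν B ≠ 0) : (W ∩ A ×ˢ B).Nonempty :=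
  (hW (A ∩ s) (B ∩ t) (hA.inter hs) (hB.inter ht) inter_subset_right inter_subset_right
    (measure_inter_ne_zero_of_absolutelyContinuous_restrict hμ hA hμA).pos
    (measure_inter_ne_zero_of_absolutelyContinuous_restrict hν hB hνB).pos).mono <|
      inter_subset_inter_right W (prod_mono inter_subset_left inter_subset_left)

end MarginallyNull

section Subcoupling

variable {X Y X' Y' : Type*} [MeasurableSpace X] [MeasurableSpace Y]
  [MeasurableSpace X'] [MeasurableSpace Y']

/-- `m` is a partial coupling of `μ` and `ν` carried by `W`: its marginals are dominated by,
rather than equal to, `μ` and `ν`. -/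
structure IsSubcoupling (μ : Measure X) (ν : Measure Y) (W : Set (X × Y)) (m : Measure (X × Y)) :
    Prop where
  ae_mem : ∀ᵐ z ∂m, z ∈ W
  map_fst_le : m.map Prod.fst ≤ μ
  map_snd_le : m.map Prod.snd ≤ ν

namespace IsSubcoupling

variable {μ : Measure X} {ν : Measure Y} {W V : Set (X × Y)} {m r : Measure (X × Y)}

lemma zero : IsSubcoupling μ ν W 0 :=
  ⟨by simp, by simp [Measure.zero_le], by simp [Measure.zero_le]⟩

lemma mono (hm : IsSubcoupling μ ν W m) (hWV : W ⊆ V) : IsSubcoupling μ ν V m :=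
  ⟨hm.ae_mem.mono fun _ hz => hWV hz, hm.map_fst_le, hm.map_snd_le⟩

lemma measure_univ_le (hm : IsSubcoupling μ ν W m) : m univ ≤ μ univ := by
  simpa [Measure.map_apply measurable_fst] using hm.map_fst_le univ

lemma isFiniteMeasure [IsFiniteMeasure μ] (hm : IsSubcoupling μ ν W m) : IsFiniteMeasure m :=
  ⟨hm.measure_univ_le.trans_lt (measure_lt_top μ univ)⟩

lemma add [IsFiniteMeasure μ] [IsFiniteMeasure ν] (hm : IsSubcoupling μ ν W m)
    (hr : IsSubcoupling (μ - m.map Prod.fst) (ν - m.map Prod.snd) W r) :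
    IsSubcoupling μ ν W (m + r) := by
  have := hm.isFiniteMeasure
  refine ⟨ae_add_measure_iff.2 ⟨hm.ae_mem, hr.ae_mem⟩, ?_, ?_⟩
  · rw [Measure.map_add _ _ measurable_fst, add_comm]
    exact (add_le_add_left hr.map_fst_le _).trans (Measure.sub_add_cancel_of_le hm.map_fst_le).le
  · rw [Measure.map_add _ _ measurable_snd, add_comm]
    exact (add_le_add_left hr.map_snd_le _).trans (Measure.sub_add_cancel_of_le hm.map_snd_le).le

lemma iSup {M : ℕ → Measure (X × Y)} (hmono : Monotone M) (hM : ∀ n, IsSubcoupling μ ν W (M n)) :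
    IsSubcoupling μ ν W (⨆ n, M n) := by
  have hle : ⨆ n, M n ≤ Measure.sum M := iSup_le (Measure.le_sum M)
  exact ⟨ae_mono hle (Measure.ae_sum_iff.2 fun n => (hM n).ae_mem),
    map_iSup_le_of_monotone hmono measurable_fst fun n => (hM n).map_fst_le,
    map_iSup_le_of_monotone hmono measurable_snd fun n => (hM n).map_snd_le⟩

section Comap

variable {φ : X → X'} {ψ : Y → Y'} {K : Set (X' × Y')} {m' : Measure (X' × Y')}

lemma comap (hφ : MeasurableEmbedding φ) (hψ : MeasurableEmbedding ψ)
    (hm : IsSubcoupling (μ.map φ) (ν.map ψ) K m') :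
    IsSubcoupling μ ν (Prod.map φ ψ ⁻¹' K) (m'.comap (Prod.map φ ψ)) := by
  have hφψ := hφ.prodMap hψ
  exact ⟨hφψ.ae_map_iff.1 <| hφψ.map_comap m' ▸ ae_restrict_of_ae hm.ae_mem,
    map_comap_le_of_map_le hφψ hφ measurable_fst measurable_fst rfl hm.map_fst_le,
    map_comap_le_of_map_le hφψ hψ measurable_snd measurable_snd rfl hm.map_snd_le⟩

lemma map_comap (hφ : MeasurableEmbedding φ) (hψ : MeasurableEmbedding ψ)
    (hm : IsSubcoupling (μ.map φ) (ν.map ψ) K m') :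
    (m'.comap (Prod.map φ ψ)).map (Prod.map φ ψ) = m' := by
  rw [(hφ.prodMap hψ).map_comap, range_prodMap]
  have hfst : ∀ᵐ z ∂m', z.1 ∈ range φ := ae_of_ae_map measurable_fst.aemeasurable <|
    ae_mono hm.map_fst_le <| hφ.ae_map_iff.2 <| .of_forall mem_range_self
  have hsnd : ∀ᵐ z ∂m', z.2 ∈ range ψ := ae_of_ae_map measurable_snd.aemeasurable <|
    ae_mono hm.map_snd_le <| hψ.ae_map_iff.2 <| .of_forall mem_range_self
  exact Measure.restrict_eq_self_of_ae_mem (hfst.and hsnd)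

end Comap

end IsSubcoupling

lemma exists_maximal_isSubcoupling (μ : Measure X) (ν : Measure Y) [IsFiniteMeasure μ]
    (W : Set (X × Y)) : ∃ m, Maximal (IsSubcoupling μ ν W) m := by
  have : Nonempty {m // IsSubcoupling μ ν W m} := ⟨⟨0, .zero⟩⟩
  have hfin (m : {m // IsSubcoupling μ ν W m}) : IsFiniteMeasure m.1 := m.2.isFiniteMeasure
  have hmono : Monotone fun m : {m // IsSubcoupling μ ν W m} => m.1.real univ := fun m r hmr =>
    ENNReal.toReal_mono (measure_ne_top r.1 univ) (hmr univ)
  have hbdd : BddAbove (range fun m : {m // IsSubcoupling μ ν W m} => m.1.real univ) :=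
    ⟨μ.real univ, forall_mem_range.2 fun m =>
      ENNReal.toReal_mono (measure_ne_top μ univ) m.2.measure_univ_le⟩
  obtain ⟨m, hmax⟩ := exists_forall_ge_apply_eq_of_monotone hmono hbdd fun M hM =>
    ⟨⟨⨆ n, (M n).1, .iSup hM fun n => (M n).2⟩, forall_mem_range.2 fun n =>
      le_iSup (fun n => (M n).1) n⟩
  refine ⟨m, m.2, fun r hr hmr => ?_⟩
  have := hr.isFiniteMeasure
  have huniv : m.1 univ = r univ :=
    ((ENNReal.toReal_eq_toReal_iff' (measure_ne_top _ _) (measure_ne_top _ _)).1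
      (hmax ⟨r, hr⟩ hmr)).symm
  exact (Measure.eq_of_le_of_measure_univ_eq hmr huniv).ge

lemma eq_zero_of_maximal_isSubcoupling {μ : Measure X} {ν : Measure Y} [IsFiniteMeasure μ]
    [IsFiniteMeasure ν] {W : Set (X × Y)} {m r : Measure (X × Y)}
    (hm : Maximal (IsSubcoupling μ ν W) m)
    (hr : IsSubcoupling (μ - m.map Prod.fst) (ν - m.map Prod.snd) W r) : r = 0 := by
  have := hm.prop.isFiniteMeasure
  have hle : m univ + r univ ≤ m univ :=
    hm.le_of_ge (hm.prop.add hr) (Measure.le_add_right le_rfl) univ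
  rw [← Measure.measure_univ_eq_zero]
  simpa using (ENNReal.add_le_add_iff_left (measure_ne_top m univ)).1
    (hle.trans_eq (add_zero _).symm)

end Subcoupling

section MaximalCoupling

variable {X Y : Type*} [MeasurableSpace X] [MeasurableSpace Y]

lemma isMarginallyNull_range_of_forall_eq_zero {Z : Type*}
    [TopologicalSpace X] [CompactSpace X] [T2Space X] [HasOuterApproxClosed X] [BorelSpace X]
    [TopologicalSpace Y] [CompactSpace Y] [T2Space Y] [HasOuterApproxClosed Y] [BorelSpace Y]
    [TopologicalSpace Z] [CompactSpace Z] [T2Space Z] [MeasurableSpace Z] [BorelSpace Z]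
    (p : C(Z, X)) (q : C(Z, Y)) {μ : Measure X} {ν : Measure Y}
    [IsFiniteMeasure μ] [IsFiniteMeasure ν]
    (h : ∀ m : Measure Z, m.map p ≤ μ → m.map q ≤ ν → m = 0) :
    IsMarginallyNull μ ν (range fun z => (p z, q z)) := by
  have hcost_zero : coverCost p q μ ν 1 = 0 := by
    obtain ⟨m, hp, hq, hm⟩ := exists_real_univ_eq_coverCost_one p q μ ν
    rw [← hm, h m hp hq, measureReal_zero_apply]
  have exists_cheap (n : ℕ) : ∃ a ∈ coverCosts p q μ ν 1, a < (1 / 2) ^ n :=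
    exists_lt_of_csInf_lt (coverCosts_nonempty 1) (hcost_zero.trans_lt (by positivity))
  choose _ hcovers hlt using exists_cheap
  choose f g hf hg hfg hcost using hcovers
  have hf_int (n : ℕ) : 0 ≤ ∫ x, f n x ∂μ := integral_nonneg (hf n)
  have hg_int (n : ℕ) : 0 ≤ ∫ y, g n y ∂ν := integral_nonneg (hg n)
  have hf_sum : ∀ᵐ x ∂μ, Summable fun n => f n x :=
    ae_summable_of_summable_integral (fun n => integrable_continuousMap μ (f n)) hf <|
      summable_geometric_two.of_nonneg_of_le hf_int fun n => by linarith [hg_int n, hcost n, hlt n]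
  have hg_sum : ∀ᵐ y ∂ν, Summable fun n => g n y :=
    ae_summable_of_summable_integral (fun n => integrable_continuousMap ν (g n)) hg <|
      summable_geometric_two.of_nonneg_of_le hg_int fun n => by linarith [hf_int n, hcost n, hlt n]
  refine ⟨_, _, hf_sum, hg_sum, range_subset_iff.2 fun z => ?_⟩
  by_contra hz
  simp only [mem_union, mem_preimage, mem_compl_iff, mem_ofPred_eq, not_or, not_not] at hz
  have hlim : Tendsto (fun n => f n (p z) + g n (q z)) atTop (𝓝 0) :=
    (hz.1.add hz.2).tendsto_atTop_zero
  exact zero_lt_one.not_ge (ge_of_tendsto' hlim fun n => hfg n z)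

lemma isMarginallyNull_of_isClosed
    [TopologicalSpace X] [CompactSpace X] [T2Space X] [HasOuterApproxClosed X] [BorelSpace X]
    [TopologicalSpace Y] [CompactSpace Y] [T2Space Y] [HasOuterApproxClosed Y] [BorelSpace Y]
    [SecondCountableTopologyEither X Y] {μ : Measure X} {ν : Measure Y}
    [IsFiniteMeasure μ] [IsFiniteMeasure ν] {K : Set (X × Y)} (hK : IsClosed K)
    (h : ∀ m, IsSubcoupling μ ν K m → m = 0) : IsMarginallyNull μ ν K := by
  have := isCompact_iff_compactSpace.1 hK.isCompact
  have hval : MeasurableEmbedding (Subtype.val : K → X × Y) := .subtype_coe hK.measurableSet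
  have hrange : range (fun z : K => (z.1.1, z.1.2)) = K := Subtype.range_coe
  rw [← hrange]
  refine isMarginallyNull_range_of_forall_eq_zero
    ⟨fun z : K => z.1.1, by fun_prop⟩ ⟨fun z : K => z.1.2, by fun_prop⟩ fun m hfst hsnd => ?_
  have hm : m.map Subtype.val = 0 := h _
    { ae_mem := hval.ae_map_iff.2 (.of_forall Subtype.property)
      map_fst_le := (Measure.map_map measurable_fst hval.measurable).trans_le hfst
      map_snd_le := (Measure.map_map measurable_snd hval.measurable).trans_le hsnd }
  exact (Measure.map_eq_zero_iff hval.measurable.aemeasurable).1 hm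

/-- Finite unions of measurable rectangles in a product of measurable spaces. -/
def IsRectUnion (S : Set (X × Y)) : Prop :=
  ∃ (n : ℕ) (U : Fin n → Set X) (V : Fin n → Set Y), (∀ k, MeasurableSet (U k)) ∧
    (∀ k, MeasurableSet (V k)) ∧ S = ⋃ k, U k ×ˢ V k

/-- The class `A_{δσ}` generated by the measurable rectangles of a product of measurable
spaces. -/
def IsRectDeltaSigma (W : Set (X × Y)) : Prop :=
  ∃ G : ℕ → ℕ → Set (X × Y), (∀ i j, IsRectUnion (G i j)) ∧ W = ⋃ i, ⋂ j, G i j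

lemma IsFinUnionRect.isRectUnion {S : Set (ℝ × ℝ)} (hS : IsFinUnionRect S) : IsRectUnion S := by
  obtain ⟨n, R, hR, rfl⟩ := hS
  choose U V hU hV _ _ hUV using hR
  exact ⟨n, U, V, hU, hV, iUnion_congr hUV⟩

lemma MemADeltaSigma.isRectDeltaSigma {W : Set (ℝ × ℝ)} (hW : MemADeltaSigma W) :
    IsRectDeltaSigma W := by
  obtain ⟨G, hG, hWG⟩ := hW
  exact ⟨G, fun i j => (hG i j).isRectUnion, hWG⟩

variable [StandardBorelSpace X] [StandardBorelSpace Y]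

lemma exists_isClosed_preimage_prodMap_eq_iInter {G : ℕ → Set (X × Y)}
    (hG : ∀ j, IsRectUnion (G j)) :
    ∃ (ι : Type) (_ : Countable ι) (φ : X → ι → Bool) (ψ : Y → ι → Bool)
      (K : Set ((ι → Bool) × (ι → Bool))), MeasurableEmbedding φ ∧ MeasurableEmbedding ψ ∧
      IsClosed K ∧ Prod.map φ ψ ⁻¹' K = ⋂ j, G j := by
  choose n U V hU hV hGUV using hG
  obtain ⟨φ, hφ, hφU⟩ := exists_measurableEmbedding_forall_isClopen
    fun i : Σ j, Fin (n j) => hU i.1 i.2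
  obtain ⟨ψ, hψ, hψV⟩ := exists_measurableEmbedding_forall_isClopen
    fun i : Σ j, Fin (n j) => hV i.1 i.2
  choose C hC hCU using hφU
  choose D hD hDV using hψV
  refine ⟨_, inferInstance, φ, ψ, ⋂ j, ⋃ k, C ⟨j, k⟩ ×ˢ D ⟨j, k⟩, hφ, hψ, ?_, ?_⟩
  · exact isClosed_iInter fun j => isClosed_iUnion_of_finite fun k =>
      (hC ⟨j, k⟩).isClosed.prod (hD ⟨j, k⟩).isClosed
  · simp only [preimage_iInter, preimage_iUnion, preimage_prod_map_prod, hCU, hDV, hGUV]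

variable {μ : Measure X} {ν : Measure Y} [IsFiniteMeasure μ] [IsFiniteMeasure ν]

lemma isMarginallyNull_iInter {G : ℕ → Set (X × Y)} (hG : ∀ j, IsRectUnion (G j))
    (h : ∀ m, IsSubcoupling μ ν (⋂ j, G j) m → m = 0) : IsMarginallyNull μ ν (⋂ j, G j) := by
  obtain ⟨ι, _, φ, ψ, K, hφ, hψ, hK, hKG⟩ := exists_isClosed_preimage_prodMap_eq_iInter hG
  rw [← hKG] at h ⊢
  refine (isMarginallyNull_of_isClosed hK fun m hm => ?_).preimage_prodMap hφ.measurable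
    hψ.measurable
  rw [← hm.map_comap hφ hψ, h _ (hm.comap hφ hψ), Measure.map_zero]

lemma IsRectDeltaSigma.exists_isSubcoupling_ne_zero {W : Set (X × Y)}
    (hW : IsRectDeltaSigma W) (hnull : ¬ IsMarginallyNull μ ν W) :
    ∃ m, IsSubcoupling μ ν W m ∧ m ≠ 0 := by
  obtain ⟨G, hG, rfl⟩ := hW
  contrapose! hnull
  exact .iUnion fun i => isMarginallyNull_iInter (hG i) fun m hm =>
    hnull m (hm.mono (subset_iUnion (fun i => ⋂ j, G i j) i))

end MaximalCoupling

lemma iSup_measure_eq_measure_univ_of_exists_coupling {X Y : Type*} [MeasurableSpace X]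
    [MeasurableSpace Y] {μ : Measure X} {ν : Measure Y} {W : Set (X × Y)}
    (h : ∃ m : Measure (X × Y), m.map Prod.fst = μ ∧ m.map Prod.snd = ν ∧ ∀ᵐ z ∂m, z ∈ W) :
    (⨆ (m : Measure (X × Y)) (_ : m.map Prod.fst = μ ∧ m.map Prod.snd = ν), m W) = μ univ := by
  have measure_univ_eq {m : Measure (X × Y)} (hm : m.map Prod.fst = μ) : m univ = μ univ := by
    simp [← hm, Measure.map_apply measurable_fst]
  obtain ⟨m, hfst, hsnd, hmW⟩ := h
  refine le_antisymm (iSup₂_le fun r hr => ?_) (le_iSup₂_of_le m ⟨hfst, hsnd⟩ ?_)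
  · exact (measure_mono (subset_univ W)).trans_eq (measure_univ_eq hr.1)
  · exact ((measure_eq_measure_of_null_sdiff (subset_univ W)
      (by rwa [← compl_eq_univ_sdiff])).trans (measure_univ_eq hfst)).ge

theorem stmt19_general {X Y : Type*} [MeasurableSpace X] [StandardBorelSpace X]
    [MeasurableSpace Y] [StandardBorelSpace Y] {μ : Measure X} {ν : Measure Y}
    [IsFiniteMeasure μ] [IsFiniteMeasure ν] {W : Set (X × Y)} (huniv : μ univ = ν univ)
    (hW : IsRectDeltaSigma W)
    (hmeet : ∀ A B, MeasurableSet A → MeasurableSet B → μ A ≠ 0 → ν B ≠ 0 →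
      (W ∩ A ×ˢ B).Nonempty) :
    ∃ m : Measure (X × Y), m.map Prod.fst = μ ∧ m.map Prod.snd = ν ∧ ∀ᵐ z ∂m, z ∈ W := by
  obtain ⟨m, hm⟩ := exists_maximal_isSubcoupling μ ν W
  have := hm.prop.isFiniteMeasure
  have hfst : m.map Prod.fst univ = m univ := by simp [Measure.map_apply measurable_fst]
  have hsnd : m.map Prod.snd univ = m univ := by simp [Measure.map_apply measurable_snd]
  have hfull : m univ = μ univ := by
    by_contra hne
    obtain ⟨r, hr, hr_ne⟩ := hW.exists_isSubcoupling_ne_zero <|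
      not_isMarginallyNull_of_forall_inter_prod_nonempty hmeet
        (Measure.absolutelyContinuous_of_le Measure.sub_le)
        (Measure.absolutelyContinuous_of_le Measure.sub_le)
        (measure_sub_ne_zero_of_le_of_measure_univ_ne hm.prop.map_fst_le (hfst.trans_ne hne))
        (measure_sub_ne_zero_of_le_of_measure_univ_ne hm.prop.map_snd_le
          (hsnd.trans_ne (huniv ▸ hne)))
    exact hr_ne (eq_zero_of_maximal_isSubcoupling hm hr)
  exact ⟨m, Measure.eq_of_le_of_measure_univ_eq hm.prop.map_fst_le (hfst.trans hfull),
    Measure.eq_of_le_of_measure_univ_eq hm.prop.map_snd_le (hsnd.trans (hfull.trans huniv)),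
    hm.prop.ae_mem⟩

theorem stmt19 (μ ν : Measure ℝ) [IsProbabilityMeasure μ] [IsProbabilityMeasure ν]
    (hμ : μ ≪ volume.restrict (Ioo (0:ℝ) 1))
    (hν : ν ≪ volume.restrict (Ioo (0:ℝ) 1))
    (W : Set (ℝ × ℝ)) (hW : MemADeltaSigma W)
    (hmeet : ∀ A B : Set ℝ, MeasurableSet A → MeasurableSet B →
      A ⊆ Ioo (0:ℝ) 1 → B ⊆ Ioo (0:ℝ) 1 →
      0 < volume A → 0 < volume B → (W ∩ A ×ˢ B).Nonempty) :
    (⨆ (m : Measure (ℝ × ℝ)) (_ : m.map Prod.fst = μ ∧ m.map Prod.snd = ν),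
      m W) = 1 := by
  rw [iSup_measure_eq_measure_univ_of_exists_coupling, measure_univ]
  exact stmt19_general (by simp only [measure_univ]) hW.isRectDeltaSigma fun A B =>
    inter_prod_nonempty_of_absolutelyContinuous_restrict measurableSet_Ioo measurableSet_Ioo hμ hν
      hmeet
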